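/- arXiv:2108.02692 — 3 statements merged into one kernel-verified Lean document; each statement's English description precedes it below -/
import Mathlib

section
/- Let P be a MultiSLP over a finite set C of constants, let v be a variable of P that occurs exactly once as an argument of another statement and does not occur in the return list, and let Q be the MultiSLP obtained from P by deleting the statement v ← ⊕(t_1,…,t_n) and replacing the single occurrence of v in the argument list of the statement using it by the terms t_1,…,t_n (in place). Then Q is equivalent to P (it has the same result as P) and #_M(Q) < #_M(P); in fact #_M(Q) = #_M(P) − 2. -/
/-- Terms of a MultiSLP over a set of constants `C`:
either a constant, or a variable referenced by its statement index. -/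
inductive Term (C : Type) where
  | const : C → Term C
  | var : ℕ → Term C
  deriving DecidableEq

/-- A MultiSLP over the constants `C`: a sequence of statements
`v_i ← ⊕(t_{i,1},…,t_{i,n_i})` (statement `i` defines variable `i`, each `n_i ≥ 2`,
and every variable used in statement `i` has index `< i`), followed by a return
list of terms whose variables are all defined. -/
structure MultiSLP (C : Type) where
  stmts : List (List (Term C))
  ret : List (Term C)
  arity : ∀ args ∈ stmts, 2 ≤ args.length
  wfStmts : ∀ i, i < stmts.length → ∀ t ∈ stmts.getD i [], ∀ j, t = Term.var j → j < i
  wfRet : ∀ t ∈ ret, ∀ j, t = Term.var j → j < stmts.length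

/-- The value of a constant `c` is the standard basis vector `e_c` of `GF(2)^C`. -/
def eConst {C : Type} [DecidableEq C] (c : C) : C → ZMod 2 := fun d => if d = c then 1 else 0

/-- Value of a term, given the list of values of the previously defined variables. -/
def Term.eval {C : Type} [DecidableEq C] (env : List (C → ZMod 2)) : Term C → (C → ZMod 2)
  | .const c => eConst c
  | .var j => env.getD j 0

/-- Values of the variables of a MultiSLP: the value of variable `i` is the GF(2)-sum
(XOR) of the values of the arguments of statement `i`. -/
def MultiSLP.envList {C : Type} [DecidableEq C] (P : MultiSLP C) : List (C → ZMod 2) :=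
  P.stmts.foldl (fun env args => env ++ [(args.map (Term.eval env)).sum]) []

/-- The result of a MultiSLP: the tuple of values of its returned terms. -/
def MultiSLP.result {C : Type} [DecidableEq C] (P : MultiSLP C) : List (C → ZMod 2) :=
  P.ret.map (Term.eval P.envList)

/-- The value of variable `i` of a MultiSLP. -/
def MultiSLP.value {C : Type} [DecidableEq C] (P : MultiSLP C) (i : ℕ) : C → ZMod 2 :=
  P.envList.getD i 0

/-- The memory-access cost `#_M(P) = Σ_i (n_i + 1)`. -/
def MultiSLP.costM {C : Type} (P : MultiSLP C) : ℕ :=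
  (P.stmts.map fun args => args.length + 1).sum

/-- Shift variable indices after deleting statement `i`: variables with index `> i`
are decremented by one. -/
def shiftTerm {C : Type} (i : ℕ) : Term C → Term C
  | .const c => .const c
  | .var j => .var (if i < j then j - 1 else j)

/-- Replace each occurrence of the variable `v_i` in an argument list, in place,
by the list of terms `repl`. -/
def substVar {C : Type} [DecidableEq C] (i : ℕ) (repl : List (Term C))
    (args : List (Term C)) : List (Term C) :=
  args.flatMap fun t => if t = Term.var i then repl else [t]

/-!
The values of the variables form the unique solution of the equations
`v_k = ⊕(t_{k,1},…,t_{k,n_k})`; it is unique because each equation refers only to earlier variables.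
Substituting the equation of `v_i` into all the others and forgetting `v_i` preserves solutions, so
the values of `Q` are those of `P` with entry `i` erased.  Each substitution trades one argument for
`n`, and deleting statement `i` saves `n + 1`; with a single occurrence this makes
`-1 + n - (n + 1) = -2`.
-/

section ListRecursion

variable {α β : Type*} (f : List β → α → β)

/-- The list computed from `l` by course-of-values recursion: each entry is `f` applied to the
entries computed so far and to the corresponding entry of `l`. -/
def courseOfValues (l : List α) : List β :=
  l.foldl (fun acc a => acc ++ [f acc a]) []

theorem courseOfValues_append_singleton (l : List α) (a : α) :
    courseOfValues f (l ++ [a]) = courseOfValues f l ++ [f (courseOfValues f l) a] := by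
  simp only [courseOfValues, List.foldl_append, List.foldl_cons, List.foldl_nil]

theorem length_courseOfValues (l : List α) : (courseOfValues f l).length = l.length := by
  induction l using List.reverseRecOn with
  | nil => rfl
  | append_singleton l a ih => simp [courseOfValues_append_singleton, ih]

theorem getElem?_courseOfValues (l : List α) (k : ℕ) :
    (courseOfValues f l)[k]? = l[k]?.map (f ((courseOfValues f l).take k)) := by
  induction l using List.reverseRecOn with
  | nil => rfl
  | append_singleton l a ih =>
    have hlen := length_courseOfValues f l
    rw [courseOfValues_append_singleton]
    rcases lt_trichotomy k l.length with hk | rfl | hk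
    · rw [List.getElem?_append_left (hlen ▸ hk), List.getElem?_append_left hk, ih,
        List.take_append_of_le_length (hlen ▸ hk.le)]
    · simp [← hlen]
    · simp [List.getElem?_append_right, hlen, hk.le, Nat.sub_ne_zero_of_lt hk]

end ListRecursion

theorem getD_eraseIdx {α : Type*} (l : List α) (i k : ℕ) (d : α) :
    (l.eraseIdx i).getD k d = l.getD (if k < i then k else k + 1) d := by
  simp only [List.getD_eq_getElem?_getD, List.getElem?_eraseIdx]
  split_ifs <;> rfl

theorem lt_length_of_mem_getD_nil {α : Type*} {a : α} {l : List (List α)} {k : ℕ}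
    (h : a ∈ l.getD k []) : k < l.length := by
  by_contra hk
  rw [List.getD_eq_default _ _ (not_lt.mp hk)] at h
  exact List.not_mem_nil h

theorem count_flatten_eq_count_getD {α : Type*} [DecidableEq α] {a : α} {l : List (List α)}
    {j : ℕ} (h : ∀ k, k < l.length → k ≠ j → a ∉ l.getD k []) :
    l.flatten.count a = (l.getD j []).count a := by
  have hzero (k : Fin l.length) (hkj : k.val ≠ j) : l[k.val].count a = 0 := by
    have hnotMem := h k k.isLt hkj
    rw [List.getD_eq_getElem _ _ k.isLt] at hnotMem
    exact List.count_eq_zero.mpr hnotMem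
  rw [List.count_flatten, ← Fin.sum_univ_fun_getElem]
  by_cases hj : j < l.length
  · rw [List.getD_eq_getElem _ _ hj]
    exact Fintype.sum_eq_single ⟨j, hj⟩ fun k hk => hzero k fun hkj => hk (Fin.ext hkj)
  · rw [List.getD_eq_default _ _ (not_lt.mp hj), List.count_nil]
    exact Finset.sum_eq_zero fun k _ => hzero k fun hkj => hj (hkj ▸ k.isLt)

theorem sum_map_eraseIdx_add {α M : Type*} [AddCommMonoid M] {l : List α} {i : ℕ}
    (f : α → M) (hi : i < l.length) :
    ((l.eraseIdx i).map f).sum + f l[i] = (l.map f).sum := by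
  rw [add_comm, ← List.sum_cons, ← List.map_cons]
  exact ((List.getElem_cons_eraseIdx_perm hi).map f).sum_eq

section ArgumentLists

variable {C : Type} [DecidableEq C] {i : ℕ} {env env' : List (C → ZMod 2)}
  {repl args : List (Term C)}

/-- The value of `⊕(t_1,…,t_n)` when the variables take the values listed in `env`. -/
def xorSum (env : List (C → ZMod 2)) (args : List (Term C)) : C → ZMod 2 :=
  (args.map (Term.eval env)).sum

theorem xorSum_congr (h : ∀ j, Term.var j ∈ args → env.getD j 0 = env'.getD j 0) :
    xorSum env args = xorSum env' args := by
  refine congrArg List.sum (List.map_congr_left fun t ht => ?_)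
  cases t with
  | const c => rfl
  | var j => exact h j ht

theorem eval_eraseIdx_shiftTerm {t : Term C} (ht : t ≠ Term.var i) :
    Term.eval (env.eraseIdx i) (shiftTerm i t) = Term.eval env t := by
  cases t with
  | const c => rfl
  | var j =>
    have hji : j ≠ i := fun h => ht (h ▸ rfl)
    simp only [shiftTerm, Term.eval, getD_eraseIdx]
    congr 1
    split_ifs <;> lia

theorem map_eval_eraseIdx_map_shiftTerm (h : Term.var i ∉ args) :
    (args.map (shiftTerm i)).map (Term.eval (env.eraseIdx i)) = args.map (Term.eval env) := by
  rw [List.map_map]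
  exact List.map_congr_left fun t ht => eval_eraseIdx_shiftTerm (ne_of_mem_of_not_mem ht h)

theorem xorSum_eraseIdx_map_shiftTerm (h : Term.var i ∉ args) :
    xorSum (env.eraseIdx i) (args.map (shiftTerm i)) = xorSum env args :=
  congrArg List.sum (map_eval_eraseIdx_map_shiftTerm h)

theorem substVar_eq_self (h : Term.var i ∉ args) : substVar i repl args = args := by
  have hsingle : ∀ t ∈ args, (if t = Term.var i then repl else [t]) = [t] :=
    fun t ht => if_neg (ne_of_mem_of_not_mem ht h)
  rw [substVar, List.flatMap_congr hsingle, List.flatMap_singleton']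

theorem var_notMem_substVar (h : Term.var i ∉ repl) : Term.var i ∉ substVar i repl args := by
  simp only [substVar, List.mem_flatMap, not_exists, not_and]
  intro t _
  split_ifs with ht
  · exact h
  · simpa using Ne.symm ht

theorem xorSum_substVar (h : env.getD i 0 = xorSum env repl) :
    xorSum env (substVar i repl args) = xorSum env args := by
  simp only [xorSum, substVar] at h ⊢
  induction args with
  | nil => rfl
  | cons t args ih =>
    rw [List.flatMap_cons, List.map_append, List.sum_append, ih, List.map_cons, List.sum_cons]
    split_ifs with ht
    · rw [← h, ht, Term.eval]
    · simp

theorem length_substVar_add_count (i : ℕ) (repl args : List (Term C)) :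
    (substVar i repl args).length + args.count (Term.var i) =
      args.length + args.count (Term.var i) * repl.length := by
  simp only [substVar]
  induction args with
  | nil => simp
  | cons t args ih =>
    rw [List.flatMap_cons, List.length_append, List.count_cons, List.length_cons]
    by_cases ht : t = Term.var i
    · simp only [ht, if_true, beq_self_eq_true, add_mul]
      lia
    · simp only [ht, if_false, beq_iff_eq, List.length_singleton]
      lia

end ArgumentLists

section Inlining

variable {C : Type} [DecidableEq C] {i j : ℕ} {stmts : List (List (Term C))}

/-- Eliminates the variable `v_i` from a list of statements: its definition is substituted for all
its occurrences, however many there are, statement `i` is deleted and the later variables are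
renumbered. -/
def inlineVar (i : ℕ) (stmts : List (List (Term C))) : List (List (Term C)) :=
  ((stmts.map (substVar i (stmts.getD i []))).eraseIdx i).map (List.map (shiftTerm i))

theorem length_inlineVar (i : ℕ) (stmts : List (List (Term C))) :
    (inlineVar i stmts).length = if i < stmts.length then stmts.length - 1 else stmts.length := by
  simp only [inlineVar, List.length_map, List.length_eraseIdx]

theorem getD_inlineVar (i k : ℕ) (stmts : List (List (Term C))) :
    (inlineVar i stmts).getD k [] = (substVar i (stmts.getD i [])
      (stmts.getD (if k < i then k else k + 1) [])).map (shiftTerm i) := by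
  have hsubst (m : ℕ) : (stmts.map (substVar i (stmts.getD i []))).getD m [] =
      substVar i (stmts.getD i []) (stmts.getD m []) :=
    List.getD_map stmts [] (substVar i (stmts.getD i []))
  rw [← hsubst, ← getD_eraseIdx]
  exact List.getD_map _ [] (List.map (shiftTerm i))

theorem set_substVar_eq_map_substVar {repl : List (Term C)}
    (h : ∀ k, k < stmts.length → k ≠ j → Term.var i ∉ stmts.getD k []) :
    stmts.set j (substVar i repl (stmts.getD j [])) = stmts.map (substVar i repl) := by
  refine List.ext_getElem (by simp) fun k hk _ => ?_
  rw [List.length_set] at hk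
  rw [List.getElem_set, List.getElem_map]
  split_ifs with hjk
  · rw [hjk, List.getD_eq_getElem _ _ hk]
  · have hnotMem := h k hk (Ne.symm hjk)
    rw [List.getD_eq_getElem _ _ hk] at hnotMem
    exact (substVar_eq_self hnotMem).symm

theorem sum_length_map_substVar_add_count (i : ℕ) (repl : List (Term C))
    (stmts : List (List (Term C))) :
    ((stmts.map (substVar i repl)).map fun args => args.length + 1).sum +
        stmts.flatten.count (Term.var i) =
      (stmts.map fun args => args.length + 1).sum +
        stmts.flatten.count (Term.var i) * repl.length := by
  rw [List.count_flatten, ← List.sum_map_mul_right, List.map_map, ← List.sum_map_add,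
    ← List.sum_map_add]
  refine congrArg List.sum (List.map_congr_left fun args _ => ?_)
  have hlength := length_substVar_add_count i repl args
  simp only [Function.comp_apply]
  lia

end Inlining

namespace MultiSLP

theorem var_lt_of_mem_stmts {C : Type} {P : MultiSLP C} {j k : ℕ}
    (h : Term.var j ∈ P.stmts.getD k []) : j < k :=
  P.wfStmts k (lt_length_of_mem_getD_nil h) _ h j rfl

section Fusion

variable {C : Type} [DecidableEq C] {P Q : MultiSLP C} {i : ℕ}

theorem envList_eq_courseOfValues (P : MultiSLP C) :
    P.envList = courseOfValues xorSum P.stmts :=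
  rfl

theorem length_envList (P : MultiSLP C) : P.envList.length = P.stmts.length :=
  length_courseOfValues xorSum P.stmts

theorem value_eq_xorSum (P : MultiSLP C) (k : ℕ) :
    P.value k = xorSum P.envList (P.stmts.getD k []) := by
  have hprefix : P.value k = xorSum (P.envList.take k) (P.stmts.getD k []) := by
    rw [value, List.getD_eq_getElem?_getD, envList_eq_courseOfValues,
      getElem?_courseOfValues, List.getD_eq_getElem?_getD]
    cases P.stmts[k]? <;> rfl
  rw [hprefix]
  refine xorSum_congr fun j hj => ?_
  rw [List.getD_eq_getElem?_getD, List.getElem?_take_of_lt (var_lt_of_mem_stmts hj),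
    List.getD_eq_getElem?_getD]

theorem eq_envList_of_getD_eq_xorSum {env : List (C → ZMod 2)}
    (hlength : env.length = P.stmts.length)
    (h : ∀ k, env.getD k 0 = xorSum env (P.stmts.getD k [])) : env = P.envList := by
  have hvalue (k : ℕ) : env.getD k 0 = P.value k := by
    induction k using Nat.strong_induction_on with
    | _ k ih =>
      rw [h, value_eq_xorSum]
      exact xorSum_congr fun j hj => ih j (var_lt_of_mem_stmts hj)
  refine List.ext_getElem (by rw [hlength, length_envList]) fun k hk hk' => ?_
  simpa only [value, List.getD_eq_getElem _ _ hk, List.getD_eq_getElem _ _ hk']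
    using hvalue k

theorem envList_eq_eraseIdx_of_stmts_eq_inlineVar (hQ : Q.stmts = inlineVar i P.stmts) :
    Q.envList = P.envList.eraseIdx i := by
  refine (eq_envList_of_getD_eq_xorSum ?_ fun k => ?_).symm
  · rw [hQ, length_inlineVar, List.length_eraseIdx, length_envList]
  set m := if k < i then k else k + 1
  have hself : Term.var i ∉ P.stmts.getD i [] := fun h => (var_lt_of_mem_stmts h).false
  calc (P.envList.eraseIdx i).getD k 0
      = P.value m := getD_eraseIdx _ i k 0
    _ = xorSum P.envList (P.stmts.getD m []) := value_eq_xorSum P m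
    _ = xorSum P.envList (substVar i (P.stmts.getD i []) (P.stmts.getD m [])) :=
        (xorSum_substVar (value_eq_xorSum P i)).symm
    _ = xorSum (P.envList.eraseIdx i)
          ((substVar i (P.stmts.getD i []) (P.stmts.getD m [])).map (shiftTerm i)) :=
        (xorSum_eraseIdx_map_shiftTerm (var_notMem_substVar hself)).symm
    _ = xorSum (P.envList.eraseIdx i) (Q.stmts.getD k []) := by rw [hQ, getD_inlineVar]

theorem result_eq_of_stmts_eq_inlineVar (hret : Term.var i ∉ P.ret)
    (hQ : Q.stmts = inlineVar i P.stmts) (hQret : Q.ret = P.ret.map (shiftTerm i)) :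
    Q.result = P.result := by
  rw [result, hQret, envList_eq_eraseIdx_of_stmts_eq_inlineVar hQ,
    map_eval_eraseIdx_map_shiftTerm hret, result]

theorem costM_add_of_stmts_eq_inlineVar (hi : i < P.stmts.length)
    (hQ : Q.stmts = inlineVar i P.stmts) :
    Q.costM + ((P.stmts.getD i []).length + 1) + P.stmts.flatten.count (Term.var i) =
      P.costM + P.stmts.flatten.count (Term.var i) * (P.stmts.getD i []).length := by
  have hself : Term.var i ∉ P.stmts[i] := fun h =>
    (var_lt_of_mem_stmts (List.getD_eq_getElem _ [] hi ▸ h)).false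
  have hshift : (fun args => args.length + 1) ∘ List.map (shiftTerm i) =
      fun args : List (Term C) => args.length + 1 := by
    funext args
    simp only [Function.comp_apply, List.length_map]
  have herase := sum_map_eraseIdx_add (l := P.stmts.map (substVar i (P.stmts.getD i [])))
    (fun args => args.length + 1) (by rwa [List.length_map])
  rw [List.getElem_map, substVar_eq_self hself, ← List.getD_eq_getElem _ [] hi] at herase
  rw [costM, hQ, inlineVar, List.map_map, hshift, herase]
  exact sum_length_map_substVar_add_count i _ P.stmts

end Fusion

end MultiSLP

theorem xor_fusion_step_general {C : Type} [DecidableEq C] (P Q : MultiSLP C) (i j : ℕ)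
    (hcount : (P.stmts.getD j []).count (Term.var i) = 1)
    (honce : ∀ k, k < P.stmts.length → k ≠ j → Term.var i ∉ P.stmts.getD k [])
    (hret : Term.var i ∉ P.ret)
    (hQstmts : Q.stmts =
      ((P.stmts.set j (substVar i (P.stmts.getD i []) (P.stmts.getD j []))).eraseIdx i).map
        (List.map (shiftTerm i)))
    (hQret : Q.ret = P.ret.map (shiftTerm i)) :
    Q.result = P.result ∧ Q.costM = P.costM - 2 ∧ Q.costM < P.costM := by
  have hmem : Term.var i ∈ P.stmts.getD j [] := List.count_pos_iff.mp (hcount ▸ one_pos)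
  have hij : i < j := MultiSLP.var_lt_of_mem_stmts hmem
  have hj : j < P.stmts.length := lt_length_of_mem_getD_nil hmem
  have hinline : Q.stmts = inlineVar i P.stmts := by
    rw [hQstmts, set_substVar_eq_map_substVar honce, inlineVar]
  have hcost : Q.costM + 2 = P.costM := by
    have h := MultiSLP.costM_add_of_stmts_eq_inlineVar (hij.trans hj) hinline
    rw [count_flatten_eq_count_getD honce, hcount, one_mul] at h
    lia
  exact ⟨MultiSLP.result_eq_of_stmts_eq_inlineVar hret hinline hQret, by lia, by lia⟩

/-- **XOR fusion step.** Let `P` be a MultiSLP over a finite set `C` of constants,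
let `v = v_i` be a variable of `P` that occurs exactly once as an argument of another
statement (statement `j`) and does not occur in the return list, and let `Q` be
obtained from `P` by deleting statement `i` (`v ← ⊕(t_1,…,t_n)`) and replacing the
single occurrence of `v` in the argument list of statement `j` by `t_1,…,t_n` in place
(with variable indices shifted accordingly).  Then `Q` is equivalent to `P` and
`#_M(Q) = #_M(P) − 2 < #_M(P)`. -/
theorem xor_fusion_step {C : Type} [Fintype C] [DecidableEq C]
    (P Q : MultiSLP C) (i j : ℕ)
    (hij : i < j) (hj : j < P.stmts.length)
    (hcount : (P.stmts.getD j []).count (Term.var i) = 1)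
    (honce : ∀ k, k < P.stmts.length → k ≠ j → Term.var i ∉ P.stmts.getD k [])
    (hret : Term.var i ∉ P.ret)
    (hQstmts : Q.stmts =
      ((P.stmts.set j (substVar i (P.stmts.getD i []) (P.stmts.getD j []))).eraseIdx i).map
        (List.map (shiftTerm i)))
    (hQret : Q.ret = P.ret.map (shiftTerm i)) :
    Q.result = P.result ∧ Q.costM = P.costM - 2 ∧ Q.costM < P.costM :=
  xor_fusion_step_general P Q i j hcount honce hret hQstmts hQret
end

section
/- Let G be a finite simple graph with node set N and edge set E, and let X ⊆ N be a vertex cover of G with |X| = k. Then there exists a MultiSLP Q over the constants of P_G that is equivalent to P_G and satisfies #_M(Q) = 3·|E| + 8·|N| + k. -/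
/-- The constants used by `P_G`: the fresh constant `ρ`, the nodes of `G`,
and for each node `a` the fresh local nodes `λ_a` and `μ_a`. -/
inductive Const (N : Type) where
  | rho : Const N
  | node : N → Const N
  | lam : N → Const N
  | mu : N → Const N
  deriving DecidableEq

/-- The result of `P_G`: the family of values `e_ρ + e_x + e_y` indexed by the
edges of `G_modif` (first the edges of `G`, enumerated by the list `L`, then for
each node `a` — enumerated by `nodes` — the two local edges `(a,λ_a)` and `(a,μ_a)`).
A MultiSLP `Q` is equivalent to `P_G` iff `Q.result = targetValues L nodes`. -/
def targetValues {N : Type} [DecidableEq N] (L : List (N × N)) (nodes : List N) :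
    List (Const N → ZMod 2) :=
  (L.map fun p =>
    eConst Const.rho + eConst (Const.node p.1) + eConst (Const.node p.2))
  ++ nodes.flatMap fun a =>
      [eConst Const.rho + eConst (Const.node a) + eConst (Const.lam a),
       eConst Const.rho + eConst (Const.node a) + eConst (Const.mu a)]

/-!
Compute `ρ ⊕ a` once for every node `a` of the cover, at cost 3 each.  A goal `ρ ⊕ a ⊕ c` with `a`
in the cover is then a sum of two terms (cost 3), any other goal a sum of three (cost 4).  Every
edge of `G` has a covered endpoint, so only the two local edges at each of the `|N| - k` uncovered
nodes pay 4, and the total is `3k + 3|E| + 6k + 8(|N| - k) = 3|E| + 8|N| + k`.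
-/

theorem map_getD_range' {α : Type*} {l : List α} {m n : ℕ} (d : α) (h : l.length = m + n) :
    (List.range' m n).map (l.getD · d) = l.drop m := by
  refine List.ext_getElem (by simp [h]) fun i hi _ => ?_
  have : m + i < l.length := by
    rw [List.length_map, List.length_range'] at hi
    omega
  simp [this]

theorem card_add_countP_notMem {α : Type*} [DecidableEq α] {l : List α} (hl : l.Nodup)
    {X : Finset α} (hX : ∀ a ∈ X, a ∈ l) : X.card + l.countP (· ∉ X) = l.length := by
  have sdiff_eq : l.toFinset \ X = (l.filter (· ∉ X)).toFinset := by
    ext a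
    simp
  calc X.card + l.countP (· ∉ X) = X.card + (l.toFinset \ X).card := by
        rw [sdiff_eq, List.toFinset_card_of_nodup (hl.filter _), List.countP_eq_length_filter]
    _ = l.toFinset.card := by
      rw [add_comm, Finset.card_sdiff_add_card_eq_card fun a ha => List.mem_toFinset.mpr (hX a ha)]
    _ = l.length := List.toFinset_card_of_nodup hl

theorem length_eq_card_of_nodup_of_forall_mem {α : Type*} [Fintype α] {l : List α}
    (hl : l.Nodup) (hmem : ∀ a, a ∈ l) : l.length = Fintype.card α := by
  classical
  have toFinset_eq : l.toFinset = Finset.univ :=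
    Finset.eq_univ_of_forall fun a => List.mem_toFinset.mpr (hmem a)
  rw [← List.toFinset_card_of_nodup hl, toFinset_eq, Finset.card_univ]

theorem card_edgeFinset_eq_length {V : Type*} {G : SimpleGraph V} [Fintype G.edgeSet]
    {l : List (Sym2 V)} (hl : l.Nodup) (hmem : ∀ e, e ∈ l ↔ e ∈ G.edgeSet) :
    G.edgeFinset.card = l.length := by
  classical
  have edgeFinset_eq : G.edgeFinset = l.toFinset := by
    ext e
    rw [SimpleGraph.mem_edgeFinset, List.mem_toFinset, hmem]
  rw [edgeFinset_eq, List.toFinset_card_of_nodup hl]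

namespace Term

variable {C : Type}

/-- A term that may occur in statement `n` of a MultiSLP: if it is a variable, its index is
below `n`. -/
def IsDefinedBefore (n : ℕ) (t : Term C) : Prop :=
  ∀ j, t = var j → j < n

theorem isDefinedBefore_const (n : ℕ) (c : C) : (const c).IsDefinedBefore n :=
  fun _ h => nomatch h

theorem isDefinedBefore_var {n j : ℕ} (h : j < n) : (var j : Term C).IsDefinedBefore n :=
  fun _ hj => Term.var.inj hj ▸ h

theorem IsDefinedBefore.mono {m n : ℕ} {t : Term C} (h : t.IsDefinedBefore m) (hmn : m ≤ n) :
    t.IsDefinedBefore n :=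
  fun j hj => (h j hj).trans_le hmn

theorem eval_append [DecidableEq C] {env : List (C → ZMod 2)} {t : Term C}
    (h : t.IsDefinedBefore env.length) (env' : List (C → ZMod 2)) :
    t.eval (env ++ env') = t.eval env := by
  cases t with
  | const c => rfl
  | var j => exact List.getD_append _ _ _ _ (h j rfl)

end Term

namespace MultiSLP

section Semantics

variable {C : Type}

/-- The condition `MultiSLP.wfStmts` for a bare list of statements. -/
def WellFormed (S : List (List (Term C))) : Prop :=
  ∀ i, i < S.length → ∀ t ∈ S.getD i [], t.IsDefinedBefore i

theorem wellFormed_nil : WellFormed ([] : List (List (Term C))) :=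
  fun _ h => absurd h (Nat.not_lt_zero _)

theorem wellFormed_concat {S : List (List (Term C))} {args : List (Term C)} :
    WellFormed (S ++ [args]) ↔ WellFormed S ∧ ∀ t ∈ args, t.IsDefinedBefore S.length := by
  have getD_left {i : ℕ} (hi : i < S.length) : (S ++ [args]).getD i [] = S.getD i [] :=
    List.getD_append _ _ _ _ hi
  have getD_last : (S ++ [args]).getD S.length [] = args := by simp
  constructor
  · intro h
    refine ⟨fun i hi => ?_, ?_⟩
    · simpa only [getD_left hi] using h i (hi.trans (by simp))
    · simpa only [getD_last] using h S.length (by simp)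
  · rintro ⟨hS, hargs⟩ i hi
    rcases Nat.lt_succ_iff_lt_or_eq.mp (by simpa using hi) with hi | rfl
    · simpa only [getD_left hi] using hS i hi
    · simpa only [getD_last] using hargs

theorem WellFormed.append {S T : List (List (Term C))} (hS : WellFormed S)
    (hT : ∀ args ∈ T, ∀ t ∈ args, t.IsDefinedBefore S.length) : WellFormed (S ++ T) := by
  induction T using List.reverseRecOn with
  | nil => simpa only [List.append_nil] using hS
  | append_singleton T args ih =>
    rw [← List.append_assoc, wellFormed_concat]
    refine ⟨ih fun b hb => hT b (List.mem_append_left _ hb), fun t ht => ?_⟩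
    exact (hT args (by simp) t ht).mono (by simp)

theorem WellFormed.isDefinedBefore_length {S : List (List (Term C))} (hS : WellFormed S)
    {args : List (Term C)} (hargs : args ∈ S) {t : Term C} (ht : t ∈ args) :
    t.IsDefinedBefore S.length := by
  obtain ⟨i, hi, rfl⟩ := List.getElem_of_mem hargs
  exact (hS i hi t (by rwa [List.getD_eq_getElem _ _ hi])).mono hi.le

/-- The MultiSLP with statements `aux` followed by `goals` that returns the variables defined by
`goals`. -/
def ofAuxGoals (aux goals : List (List (Term C)))
    (arity : ∀ args ∈ aux ++ goals, 2 ≤ args.length) (wf : WellFormed (aux ++ goals)) :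
    MultiSLP C where
  stmts := aux ++ goals
  ret := (List.range' aux.length goals.length).map Term.var
  arity := arity
  wfStmts := wf
  wfRet := by
    rintro _ ht j rfl
    simp only [List.mem_map, List.mem_range'_1, Term.var.injEq, exists_eq_right] at ht
    simpa only [List.length_append] using ht.2

variable [DecidableEq C]

/-- The value of a statement with arguments `args` when the variables have the values `env`. -/
def stmtValue (env : List (C → ZMod 2)) (args : List (Term C)) : C → ZMod 2 :=
  (args.map (Term.eval env)).sum

theorem stmtValue_append {env : List (C → ZMod 2)} {args : List (Term C)}
    (h : ∀ t ∈ args, t.IsDefinedBefore env.length) (env' : List (C → ZMod 2)) :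
    stmtValue (env ++ env') args = stmtValue env args :=
  congrArg List.sum (List.map_congr_left fun t ht => Term.eval_append (h t ht) env')

/-- The values of the variables defined by a bare list of statements; `MultiSLP.envList` is
`run P.stmts`. -/
def run (S : List (List (Term C))) : List (C → ZMod 2) :=
  S.foldl (fun env args => env ++ [stmtValue env args]) []

theorem run_concat (S : List (List (Term C))) (args : List (Term C)) :
    run (S ++ [args]) = run S ++ [stmtValue (run S) args] :=
  List.foldl_concat ..

theorem length_run (S : List (List (Term C))) : (run S).length = S.length := by
  induction S using List.reverseRecOn with
  | nil => rfl
  | append_singleton S args ih => simp [run_concat, ih]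

theorem run_eq_map_stmtValue {S : List (List (Term C))} (hS : WellFormed S) :
    run S = S.map (stmtValue (run S)) := by
  induction S using List.reverseRecOn with
  | nil => rfl
  | append_singleton S args ih =>
    obtain ⟨hS, hargs⟩ := wellFormed_concat.mp hS
    have stmtValue_run_concat {b : List (Term C)} (hb : ∀ t ∈ b, t.IsDefinedBefore S.length) :
        stmtValue (run (S ++ [args])) b = stmtValue (run S) b := by
      rw [run_concat, stmtValue_append (by rwa [length_run])]
    calc run (S ++ [args]) = run S ++ [stmtValue (run S) args] := run_concat S args
      _ = S.map (stmtValue (run S)) ++ [stmtValue (run S) args] := by rw [← ih hS]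
      _ = S.map (stmtValue (run (S ++ [args]))) ++ [stmtValue (run (S ++ [args])) args] := by
        rw [stmtValue_run_concat hargs, List.map_congr_left fun b hb =>
          (stmtValue_run_concat fun t => hS.isDefinedBefore_length hb)]
      _ = (S ++ [args]).map (stmtValue (run (S ++ [args]))) := by
        rw [List.map_append, List.map_singleton]

theorem envList_eq_map_stmtValue (P : MultiSLP C) :
    P.envList = P.stmts.map (stmtValue P.envList) :=
  run_eq_map_stmtValue P.wfStmts

theorem value_eq_stmtValue (P : MultiSLP C) (i : ℕ) :
    P.value i = stmtValue P.envList (P.stmts.getD i []) := by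
  conv_lhs => rw [value, envList_eq_map_stmtValue]
  exact List.getD_map (d := []) ..

theorem result_ofAuxGoals {aux goals : List (List (Term C))}
    (arity : ∀ args ∈ aux ++ goals, 2 ≤ args.length) (wf : WellFormed (aux ++ goals)) :
    (ofAuxGoals aux goals arity wf).result =
      goals.map (stmtValue (ofAuxGoals aux goals arity wf).envList) := by
  set P := ofAuxGoals aux goals arity wf with hP
  have envList_eq : P.envList = (aux ++ goals).map (stmtValue P.envList) :=
    P.envList_eq_map_stmtValue
  calc P.result = (List.range' aux.length goals.length).map (P.envList.getD · 0) := by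
        simp only [result, hP, ofAuxGoals, List.map_map, Function.comp_def, Term.eval]
    _ = P.envList.drop aux.length := map_getD_range' _ <| by
        rw [envList_eq, List.length_map, List.length_append]
    _ = goals.map (stmtValue P.envList) := by
      conv_lhs => rw [envList_eq, List.map_append]
      exact List.drop_left' (List.length_map _)

end Semantics

section Cover

variable {N : Type}

/-- The auxiliary statements `ρ ⊕ a` for the nodes `a` of a list. -/
def auxStmts (xs : List N) : List (List (Term (Const N))) :=
  xs.map fun a => [Term.const Const.rho, Term.const (Const.node a)]

theorem length_auxStmts (xs : List N) : (auxStmts xs).length = xs.length :=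
  List.length_map _

theorem isDefinedBefore_zero_of_mem_auxStmts {xs : List N} {args : List (Term (Const N))}
    (hargs : args ∈ auxStmts xs) {t : Term (Const N)} (ht : t ∈ args) : t.IsDefinedBefore 0 := by
  obtain ⟨a, -, rfl⟩ := List.mem_map.mp hargs
  rcases List.mem_pair.mp ht with rfl | rfl <;> exact Term.isDefinedBefore_const _ _

variable [DecidableEq N]

/-- The value `e_ρ + e_a + e_c` demanded by the goal `g = (a, c)`. -/
def goalValue (g : N × Const N) : Const N → ZMod 2 :=
  eConst Const.rho + eConst (Const.node g.1) + eConst g.2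

/-- The statement computing the goal `g = (a, c)` on top of `auxStmts xs`, whose variables are
indexed by position in `xs`. -/
def goalStmt (xs : List N) (g : N × Const N) : List (Term (Const N)) :=
  if g.1 ∈ xs then [Term.var (xs.idxOf g.1), Term.const g.2]
  else [Term.const Const.rho, Term.const (Const.node g.1), Term.const g.2]

theorem length_goalStmt (xs : List N) (g : N × Const N) :
    (goalStmt xs g).length = if g.1 ∈ xs then 2 else 3 := by
  unfold goalStmt
  split_ifs <;> rfl

theorem isDefinedBefore_of_mem_goalStmt {xs : List N} {g : N × Const N} {t : Term (Const N)}
    (ht : t ∈ goalStmt xs g) : t.IsDefinedBefore xs.length := by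
  unfold goalStmt at ht
  split_ifs at ht with hg
  · rcases List.mem_pair.mp ht with rfl | rfl
    · exact Term.isDefinedBefore_var (List.idxOf_lt_length_of_mem hg)
    · exact Term.isDefinedBefore_const _ _
  · simp only [List.mem_cons, List.not_mem_nil, or_false] at ht
    rcases ht with rfl | rfl | rfl <;> exact Term.isDefinedBefore_const _ _

theorem stmtValue_goalStmt {xs : List N} {env : List (Const N → ZMod 2)}
    (henv : ∀ a ∈ xs, env.getD (xs.idxOf a) 0 = eConst Const.rho + eConst (Const.node a))
    (g : N × Const N) : stmtValue env (goalStmt xs g) = goalValue g := by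
  unfold goalStmt
  split_ifs with hg
  · simp only [stmtValue, List.map_cons, List.map_nil, List.sum_cons, List.sum_nil, add_zero,
      Term.eval, henv _ hg, goalValue]
  · simp only [stmtValue, List.map_cons, List.map_nil, List.sum_cons, List.sum_nil, add_zero,
      Term.eval, goalValue, add_assoc]

theorem two_le_length_of_mem_coverStmts {xs : List N} {gs : List (N × Const N)} :
    ∀ args ∈ auxStmts xs ++ gs.map (goalStmt xs), 2 ≤ args.length := by
  intro args hargs
  rcases List.mem_append.mp hargs with h | h
  · obtain ⟨a, -, rfl⟩ := List.mem_map.mp h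
    exact le_rfl
  · obtain ⟨g, -, rfl⟩ := List.mem_map.mp h
    rw [length_goalStmt]
    split_ifs <;> decide

theorem wellFormed_coverStmts (xs : List N) (gs : List (N × Const N)) :
    WellFormed (auxStmts xs ++ gs.map (goalStmt xs)) := by
  have wellFormed_aux : WellFormed (auxStmts xs) :=
    wellFormed_nil.append fun _ hargs _ => isDefinedBefore_zero_of_mem_auxStmts hargs
  refine wellFormed_aux.append fun args hargs t ht => ?_
  obtain ⟨g, -, rfl⟩ := List.mem_map.mp hargs
  rw [length_auxStmts]
  exact isDefinedBefore_of_mem_goalStmt ht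

/-- The MultiSLP that computes the goals `gs`, sharing the sums `ρ ⊕ a` for the nodes `a` in `xs`;
for a vertex cover `xs` and the goals of `P_G` it is the cheap equivalent of `P_G`. -/
def coverSLP (xs : List N) (gs : List (N × Const N)) : MultiSLP (Const N) :=
  ofAuxGoals (auxStmts xs) (gs.map (goalStmt xs)) two_le_length_of_mem_coverStmts
    (wellFormed_coverStmts xs gs)

theorem stmts_coverSLP (xs : List N) (gs : List (N × Const N)) :
    (coverSLP xs gs).stmts = auxStmts xs ++ gs.map (goalStmt xs) :=
  rfl

theorem value_coverSLP_idxOf {xs : List N} (gs : List (N × Const N)) {a : N} (ha : a ∈ xs) :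
    (coverSLP xs gs).value (xs.idxOf a) = eConst Const.rho + eConst (Const.node a) := by
  have idxOf_lt : xs.idxOf a < (auxStmts xs).length :=
    (List.idxOf_lt_length_of_mem ha).trans_eq (length_auxStmts xs).symm
  have stmt_eq : (auxStmts xs ++ gs.map (goalStmt xs)).getD (xs.idxOf a) [] =
      [Term.const Const.rho, Term.const (Const.node a)] := by
    rw [List.getD_append _ _ _ _ idxOf_lt, List.getD_eq_getElem _ _ idxOf_lt]
    simp only [auxStmts, List.getElem_map, List.getElem_idxOf]
  rw [value_eq_stmtValue, stmts_coverSLP, stmt_eq]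
  simp only [stmtValue, List.map_cons, List.map_nil, List.sum_cons, List.sum_nil, add_zero,
    Term.eval]

theorem result_coverSLP (xs : List N) (gs : List (N × Const N)) :
    (coverSLP xs gs).result = gs.map goalValue := by
  rw [coverSLP, result_ofAuxGoals, List.map_map]
  exact List.map_congr_left fun g _ =>
    stmtValue_goalStmt (fun _ ha => value_coverSLP_idxOf gs ha) g

theorem sum_cost_goalStmt (xs : List N) (gs : List (N × Const N)) :
    (gs.map fun g => (goalStmt xs g).length + 1).sum =
      3 * gs.length + gs.countP (·.1 ∉ xs) := by
  induction gs with
  | nil => rfl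
  | cons g gs ih =>
    rw [List.map_cons, List.sum_cons, ih, length_goalStmt, List.length_cons, List.countP_cons]
    by_cases hg : g.1 ∈ xs <;> simp only [hg, if_true, if_false, not_true, not_false_eq_true,
      decide_true, decide_false, Bool.false_eq_true] <;> ring

theorem costM_coverSLP (xs : List N) (gs : List (N × Const N)) :
    (coverSLP xs gs).costM = 3 * xs.length + 3 * gs.length + gs.countP (·.1 ∉ xs) := by
  have cost_aux : ((auxStmts xs).map fun args => args.length + 1).sum = 3 * xs.length := by
    simp [auxStmts, Function.comp_def, mul_comm]
  have cost_goals := sum_cost_goalStmt xs gs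
  simp only [costM, stmts_coverSLP, List.map_append, List.sum_append, List.map_map,
    Function.comp_def, cost_aux, cost_goals, add_assoc]

/-- The goal of an edge of `G`, oriented to start at an endpoint in `xs` if there is one. -/
def edgeGoal (xs : List N) (p : N × N) : N × Const N :=
  if p.1 ∈ xs then (p.1, Const.node p.2) else (p.2, Const.node p.1)

theorem edgeGoal_fst_mem {xs : List N} {p : N × N} (h : p.1 ∈ xs ∨ p.2 ∈ xs) :
    (edgeGoal xs p).1 ∈ xs := by
  unfold edgeGoal
  split_ifs with h₁
  · exact h₁
  · exact h.resolve_left h₁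

theorem goalValue_edgeGoal (xs : List N) (p : N × N) :
    goalValue (edgeGoal xs p) =
      eConst Const.rho + eConst (Const.node p.1) + eConst (Const.node p.2) := by
  unfold edgeGoal
  split_ifs
  · rfl
  · exact add_right_comm _ _ _

/-- The goals of `P_G`, in the order of `targetValues`: the edges `L` of `G`, oriented along `xs`,
and then the two local edges at every node. -/
def modifGoals (xs : List N) (L : List (N × N)) (nodes : List N) : List (N × Const N) :=
  L.map (edgeGoal xs) ++ nodes.flatMap fun a => [(a, Const.lam a), (a, Const.mu a)]

theorem map_goalValue_modifGoals (xs : List N) (L : List (N × N)) (nodes : List N) :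
    (modifGoals xs L nodes).map goalValue = targetValues L nodes := by
  have edges : (L.map (edgeGoal xs)).map goalValue = L.map fun p =>
      eConst Const.rho + eConst (Const.node p.1) + eConst (Const.node p.2) := by
    simp only [List.map_map, Function.comp_def, goalValue_edgeGoal]
  simp only [modifGoals, targetValues, List.map_append, edges, List.map_flatMap, List.map_cons,
    List.map_nil, goalValue]

theorem length_modifGoals (xs : List N) (L : List (N × N)) (nodes : List N) :
    (modifGoals xs L nodes).length = L.length + 2 * nodes.length := by
  simp [modifGoals, mul_comm]

theorem countP_fst_notMem_modifGoals {xs : List N} {L : List (N × N)} (nodes : List N)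
    (hL : ∀ p ∈ L, p.1 ∈ xs ∨ p.2 ∈ xs) :
    (modifGoals xs L nodes).countP (·.1 ∉ xs) = 2 * nodes.countP (· ∉ xs) := by
  have edges : (L.map (edgeGoal xs)).countP (·.1 ∉ xs) = 0 := by
    simpa [List.countP_eq_zero] using fun a b h => edgeGoal_fst_mem (hL (a, b) h)
  have locals : (nodes.flatMap fun a => [(a, Const.lam a), (a, Const.mu a)]).countP (·.1 ∉ xs) =
      2 * nodes.countP (· ∉ xs) := by
    induction nodes with
    | nil => rfl
    | cons a nodes ih =>
      simp only [List.flatMap_cons, List.countP_append, ih, List.countP_cons, List.countP_nil]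
      ring
  rw [modifGoals, List.countP_append, edges, locals, zero_add]

end Cover

end MultiSLP

/-- **From vertex covers to cheap MultiSLPs.**  Let `G` be a finite simple graph with
node set `N` and edge set `E` (enumerated without repetition by the list `L`; `nodes`
enumerates `N`), and let `X ⊆ N` be a vertex cover of `G` with `|X| = k`.  Then there
is a MultiSLP `Q` over the constants of `P_G` that is equivalent to `P_G` and satisfies
`#_M(Q) = 3·|E| + 8·|N| + k`. -/
theorem cover_to_multislp {N : Type} [Fintype N] [DecidableEq N]
    (G : SimpleGraph N) [DecidableRel G.Adj]
    (L : List (N × N)) (nodes : List N)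
    (hnodesN : nodes.Nodup) (hnodesA : ∀ a : N, a ∈ nodes)
    (hLN : (L.map fun p => s(p.1, p.2)).Nodup)
    (hLadj : ∀ p ∈ L, G.Adj p.1 p.2)
    (hLall : ∀ a b : N, G.Adj a b → s(a, b) ∈ L.map fun p => s(p.1, p.2))
    (X : Finset N) (hX : ∀ a b : N, G.Adj a b → a ∈ X ∨ b ∈ X)
    (k : ℕ) (hk : X.card = k) :
    ∃ Q : MultiSLP (Const N), Q.result = targetValues L nodes ∧
      Q.costM = 3 * G.edgeFinset.card + 8 * Fintype.card N + k := by
  have length_nodes : nodes.length = Fintype.card N :=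
    length_eq_card_of_nodup_of_forall_mem hnodesN hnodesA
  have countP_nodes : X.card + nodes.countP (· ∉ X) = nodes.length :=
    card_add_countP_notMem hnodesN fun a _ => hnodesA a
  have card_edgeFinset : G.edgeFinset.card = L.length := by
    refine (card_edgeFinset_eq_length hLN fun e => ⟨fun he => ?_, ?_⟩).trans (List.length_map _)
    · obtain ⟨p, hp, rfl⟩ := List.mem_map.mp he
      exact hLadj p hp
    · induction e with | _ a b => exact hLall a b
  have covered : ∀ p ∈ L, p.1 ∈ X.toList ∨ p.2 ∈ X.toList := fun p hp => by
    simpa only [Finset.mem_toList] using hX _ _ (hLadj p hp)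
  refine ⟨MultiSLP.coverSLP X.toList (MultiSLP.modifGoals X.toList L nodes), ?_, ?_⟩
  · rw [MultiSLP.result_coverSLP, MultiSLP.map_goalValue_modifGoals]
  · rw [MultiSLP.costM_coverSLP, MultiSLP.length_modifGoals,
      MultiSLP.countP_fst_notMem_modifGoals nodes covered, Finset.length_toList]
    simp only [Finset.mem_toList]
    omega
end

section
/- Let G be a finite simple graph with node set N and edge set E. Every MultiSLP Q that is equivalent to P_G satisfies #_M(Q) ≥ 3·|E| + 8·|N| + τ(G), where τ(G) is the minimum vertex cover number of G. -/
/-- The minimum vertex-cover number `τ(G)` of a finite simple graph `G`. -/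
noncomputable def tau {N : Type} [Fintype N] [DecidableEq N] (G : SimpleGraph N) : ℕ :=
  sInf {k | ∃ X : Finset N, (∀ a b : N, G.Adj a b → a ∈ X ∨ b ∈ X) ∧ X.card = k}

/-!
Every statement costs at least `3`, and at least `4` if it has more than two arguments. A goal
computed from two arguments needs an auxiliary value `u` among them: two constants or other goals
never sum to it, by parity. The edges that a given `u` can help have both ends in its support, if
this has size `4`, and one end in it, if it has size `2`, so together with `e_ρ` three vectors
suffice to make the ends of all these edges linearly dependent. Hence `r` auxiliary values yield a
space `W` of dimension at most `1 + 3 * r` capturing every edge whose goal has two arguments.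

The complement `X` of a maximal set of nodes independent modulo `W` covers the captured edges of
`G`, and each captured local edge adds its pendant end to the span of `W` and the nodes, whence
`1 + |X| + #(captured local edges) ≤ dim W`. The extra cost of an edge that is not captured pays for
one more node of the vertex cover, or for the missing local edge.
-/

namespace MultiSLP

open Finset

section Programs

variable {α β : Type*} {C : Type}

theorem length_foldl_snoc (f : List β → α → β) (l : List α) :
    (l.foldl (fun acc a => acc ++ [f acc a]) []).length = l.length := by
  induction l using List.reverseRecOn with
  | nil => rfl
  | append_singleton l a ih => simp [ih]

theorem getElem?_foldl_snoc (f : List β → α → β) (l : List α) (i : ℕ) :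
    (l.foldl (fun acc a => acc ++ [f acc a]) [])[i]? =
      l[i]?.map (f ((l.foldl (fun acc a => acc ++ [f acc a]) []).take i)) := by
  induction l using List.reverseRecOn with
  | nil => rfl
  | append_singleton l a ih =>
    have hlen := length_foldl_snoc f l
    simp only [List.foldl_append, List.foldl_cons, List.foldl_nil]
    rcases lt_trichotomy i l.length with hi | rfl | hi
    · rw [List.getElem?_append_left (hlen ▸ hi), List.getElem?_append_left hi,
        List.take_append_of_le_length (hlen ▸ hi.le), ih]
    · simp [← hlen]
    · rw [List.getElem?_eq_none (by simpa [hlen] using hi),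
        List.getElem?_eq_none (by simpa using hi), Option.map_none]

theorem sum_card_add_one_eq_costM (Q : MultiSLP C) :
    ∑ i : Fin Q.stmts.length, (Q.stmts[i].length + 1) = Q.costM :=
  Fin.sum_univ_fun_getElem Q.stmts fun args => args.length + 1

theorem two_le_length_getElem (Q : MultiSLP C) (i : Fin Q.stmts.length) :
    2 ≤ Q.stmts[i].length :=
  Q.arity _ (List.getElem_mem i.isLt)

theorem lt_of_var_mem (Q : MultiSLP C) {i : Fin Q.stmts.length} {j : ℕ}
    (hj : Term.var j ∈ Q.stmts[i]) : j < i :=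
  Q.wfStmts i i.isLt _ (by rwa [List.getD_eq_getElem _ _ i.isLt]) j rfl

theorem three_mul_card_add_card_le_costM {ι : Type*} [Fintype ι] (Q : MultiSLP C)
    {sel : ι → Fin Q.stmts.length} (hsel : Function.Injective sel) :
    3 * (Fintype.card ι + #(univ \ univ.image sel)) + #{j | Q.stmts[sel j].length ≠ 2}
      ≤ Q.costM := by
  have hlength : Fintype.card ι + #(univ \ univ.image sel) = Q.stmts.length := by
    have := card_sdiff_add_card_eq_card (subset_univ (univ.image sel))
    rwa [card_image_of_injective _ hsel, card_univ, card_univ, Fintype.card_fin, add_comm] at this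
  have hlong : #{j | Q.stmts[sel j].length ≠ 2} ≤
      #{i : Fin Q.stmts.length | Q.stmts[i].length ≠ 2} :=
    card_le_card_of_injOn sel (by simp [Set.MapsTo]) hsel.injOn
  calc _ ≤ 3 * Q.stmts.length + #{i : Fin Q.stmts.length | Q.stmts[i].length ≠ 2} := by
        rw [hlength]; gcongr
    _ = ∑ i : Fin Q.stmts.length, (3 + if Q.stmts[i].length ≠ 2 then 1 else 0) := by
        rw [sum_add_distrib, card_filter, sum_const, card_univ, Fintype.card_fin, smul_eq_mul,
          mul_comm]
    _ ≤ ∑ i : Fin Q.stmts.length, (Q.stmts[i].length + 1) := by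
        refine sum_le_sum fun i _ => ?_
        have := Q.two_le_length_getElem i
        split_ifs <;> omega
    _ = Q.costM := Q.sum_card_add_one_eq_costM

variable [DecidableEq C]

theorem value_eq_sum (Q : MultiSLP C) (i : Fin Q.stmts.length) :
    Q.value i = (Q.stmts[i].map (Term.eval Q.envList)).sum := by
  have hget : Q.envList[(i : ℕ)]? =
      some (Q.stmts[i].map (Term.eval (Q.envList.take i))).sum := by
    rw [envList, getElem?_foldl_snoc fun env args => (List.map (Term.eval env) args).sum,
      List.getElem?_eq_getElem i.isLt, Option.map_some]
    rfl
  rw [value, List.getD_eq_getElem?_getD, hget, Option.getD_some]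
  congr 1
  refine List.map_congr_left fun t ht => ?_
  cases t with
  | const c => rfl
  | var j =>
    simp only [Term.eval, List.getD_eq_getElem?_getD,
      List.getElem?_take_of_lt (Q.lt_of_var_mem ht)]

theorem eq_eConst_or_exists_value_eq_of_mem_result (Q : MultiSLP C) {v : C → ZMod 2}
    (hv : v ∈ Q.result) :
    (∃ c, v = eConst c) ∨ ∃ i : Fin Q.stmts.length, Q.value i = v := by
  obtain ⟨t, ht, rfl⟩ := List.mem_map.1 hv
  cases t with
  | const c => exact .inl ⟨c, rfl⟩
  | var j => exact .inr ⟨⟨j, Q.wfRet _ ht j rfl⟩, rfl⟩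

end Programs

section LinearAlgebra

theorem exists_linearIndepOn_mkQ {K V ι : Type*} [DivisionRing K] [AddCommGroup V] [Module K V]
    (W : Submodule K V) (v : ι → V) :
    ∃ I : Set ι, LinearIndepOn K (W.mkQ ∘ v) I ∧ ∀ i, v i ∈ W ⊔ Submodule.span K (v '' I) := by
  obtain ⟨I, -, -, hspan, hI⟩ := exists_linearIndepOn_extension
    (linearIndepOn_empty K (W.mkQ ∘ v)) (Set.subset_univ ∅)
  refine ⟨I, hI, fun i => ?_⟩
  rw [← Submodule.comap_map_mkQ, Submodule.mem_comap, Submodule.map_span, ← Set.image_comp]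
  exact hspan (Set.mem_image_of_mem _ (Set.mem_univ i))

theorem add_mem_of_add_mem_of_add_mem {V : Type*} [AddCommGroup V] [Module (ZMod 2) V]
    {W : Submodule (ZMod 2) V} {a x y : V} (hx : a + x ∈ W) (hy : a + y ∈ W) : x + y ∈ W := by
  have h := W.add_mem hx hy
  rwa [add_add_add_comm, ZModModule.add_self, zero_add] at h

variable {C : Type} [DecidableEq C]

theorem sum_eConst_apply (S : Finset C) (d : C) :
    (∑ c ∈ S, eConst c) d = if d ∈ S then 1 else 0 := by
  simp [eConst]

theorem sum_eConst_injective : Function.Injective fun S : Finset C => ∑ c ∈ S, eConst c := by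
  intro S T h
  ext d
  have hd := congrFun h d
  simp only [sum_eConst_apply] at hd
  split_ifs at hd <;> simp_all

theorem linearIndependent_eConst : LinearIndependent (ZMod 2) (eConst : C → C → ZMod 2) := by
  convert Pi.linearIndependent_single_one C (ZMod 2) using 1
  funext c d
  simp [eConst, Pi.single_apply]

theorem card_le_finrank_of_eConst_mem {κ : Type*} [Fintype κ] {f : κ → C}
    (hf : Function.Injective f) {U : Submodule (ZMod 2) (C → ZMod 2)} [FiniteDimensional (ZMod 2) U]
    (hU : ∀ k, eConst (f k) ∈ U) : Fintype.card κ ≤ Module.finrank (ZMod 2) U := by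
  have hli : LinearIndependent (ZMod 2) fun k => (⟨eConst (f k), hU k⟩ : U) :=
    .of_comp U.subtype (linearIndependent_eConst.comp f hf)
  exact hli.fintype_card_le_finrank

end LinearAlgebra

section Graph

variable {C : Type} [DecidableEq C]

/-- The value `e_ρ + e_x + e_y` of the goal variable of an edge `s(x, y)`. -/
def goal (ρ : C) (e : Sym2 C) : C → ZMod 2 :=
  eConst ρ + e.lift ⟨fun x y => eConst x + eConst y, fun _ _ => add_comm _ _⟩

/-- The vectors that a statement computing the goal of the edge `e` of `H` can use without any
auxiliary variable: the constants and the goals of the other edges. -/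
def IsBasicOperand (H : SimpleGraph C) (ρ : C) (e : Sym2 C) (v : C → ZMod 2) : Prop :=
  (∃ c, v = eConst c) ∨ ∃ e' ∈ H.edgeSet, e' ≠ e ∧ v = goal ρ e'

/-- The vector `u` serves the edge `e` of `H` if the goal of `e` is the sum of `u` and a basic
operand. -/
def Serves (H : SimpleGraph C) (ρ : C) (u : C → ZMod 2) (e : Sym2 C) : Prop :=
  IsBasicOperand H ρ e (u + goal ρ e)

/-- A vertex with at most one neighbour, such as the local nodes of `G_modif`. -/
def IsPendant (H : SimpleGraph C) (y : C) : Prop :=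
  (H.neighborSet y).Subsingleton

/-- The subspace `W` captures the edge `(x, y)` of `H`: its ends are linearly dependent modulo `W`,
and `e_y` lies in the span of `W` and `e_x` if `y` is pendant. -/
def Captures (H : SimpleGraph C) (W : Submodule (ZMod 2) (C → ZMod 2)) (x y : C) : Prop :=
  eConst x + eConst y ∈ W ∨ eConst y ∈ W ∨ eConst x ∈ W ∧ ¬ IsPendant H y

/-- The subspace `W` absorbs the vector `u`: it contains `u` and captures every edge of `H` that
`u` serves. -/
def Absorbs (H : SimpleGraph C) (ρ : C) (W : Submodule (ZMod 2) (C → ZMod 2))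
    (u : C → ZMod 2) : Prop :=
  u ∈ W ∧ ∀ x y, H.Adj x y → Serves H ρ u s(x, y) → Captures H W x y

variable {H : SimpleGraph C} {ρ : C} {u : C → ZMod 2} {x y : C}

theorem goal_mk (ρ x y : C) : goal ρ s(x, y) = eConst ρ + eConst x + eConst y :=
  (add_assoc _ _ _).symm

theorem goal_eq_sum (hρ : ∀ c, ¬ H.Adj ρ c) (hxy : H.Adj x y) :
    goal ρ s(x, y) = ∑ c ∈ {ρ, x, y}, eConst c := by
  have hρx : ρ ≠ x := fun h => hρ y (h ▸ hxy)
  have hρy : ρ ≠ y := fun h => hρ x (h ▸ hxy.symm)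
  rw [goal_mk, sum_insert (by simp [hρx, hρy]), sum_pair hxy.ne, add_assoc]

theorem card_insert_ends_eq_three (hρ : ∀ c, ¬ H.Adj ρ c) (hxy : H.Adj x y) :
    #({ρ, x, y} : Finset C) = 3 :=
  card_eq_three.2 ⟨ρ, x, y, fun h => hρ y (h ▸ hxy), fun h => hρ x (h ▸ hxy.symm), hxy.ne, rfl⟩

theorem exists_card_eq_three_goal_eq_sum (hρ : ∀ c, ¬ H.Adj ρ c) {e : Sym2 C}
    (he : e ∈ H.edgeSet) : ∃ S : Finset C, #S = 3 ∧ goal ρ e = ∑ c ∈ S, eConst c := by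
  induction e with | _ x y =>
  exact ⟨{ρ, x, y}, card_insert_ends_eq_three hρ he, goal_eq_sum hρ he⟩

theorem exists_support_of_add_goal_eq_eConst (hρ : ∀ c, ¬ H.Adj ρ c) (hxy : H.Adj x y) {c : C}
    (hu : u + goal ρ s(x, y) = eConst c) :
    ∃ S : Finset C, u = ∑ c ∈ S, eConst c ∧ (#S = 4 ∧ x ∈ S ∧ y ∈ S ∨
      #S = 2 ∧ (S = {x, y} ∨ S = {ρ, y} ∨ S = {ρ, x})) := by
  have hρx : ρ ≠ x := fun h => hρ y (h ▸ hxy)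
  have hρy : ρ ≠ y := fun h => hρ x (h ▸ hxy.symm)
  have hne := hxy.ne
  have hu' : u = eConst c + goal ρ s(x, y) := by
    rw [← hu, add_assoc, ZModModule.add_self, add_zero]
  have hcc := ZModModule.add_self (eConst c)
  by_cases hc : c ∈ ({ρ, x, y} : Finset C)
  · refine ⟨({ρ, x, y} : Finset C).erase c, ?_, .inr ⟨?_, ?_⟩⟩
    · rw [hu', goal_eq_sum hρ hxy, ← add_sum_erase _ _ hc, ← add_assoc, hcc, zero_add]
    · rw [card_erase_of_mem hc, card_insert_ends_eq_three hρ hxy]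
    · simp only [mem_insert, mem_singleton] at hc
      rcases hc with rfl | rfl | rfl <;> grind
  · refine ⟨insert c {ρ, x, y}, ?_, .inl ⟨?_, by simp, by simp⟩⟩
    · rw [sum_insert hc, hu', goal_eq_sum hρ hxy]
    · rw [card_insert_of_notMem hc, card_insert_ends_eq_three hρ hxy]

theorem exists_support_of_add_goal_eq_goal {e e' : Sym2 C} (he : e ∈ H.edgeSet)
    (he' : e' ∈ H.edgeSet) (hne : e' ≠ e) (hu : u + goal ρ e = goal ρ e') :
    ∃ S : Finset C, u = ∑ c ∈ S, eConst c ∧ ((#S = 4 ∧ ∀ v ∈ e, v ∈ S) ∨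
      #S = 2 ∧ ∃ v p, e = s(v, p) ∧ p ∈ S ∧ ¬ IsPendant H v) := by
  have hu' : u = goal ρ e + goal ρ e' := by
    rw [← hu, add_left_comm, ZModModule.add_self, add_zero]
  have hρρ := ZModModule.add_self (eConst ρ)
  by_cases hcommon : ∃ v, v ∈ e ∧ v ∈ e'
  · obtain ⟨v, ⟨p, rfl⟩, q, rfl⟩ := hcommon
    rw [SimpleGraph.mem_edgeSet] at he he'
    have hpq : p ≠ q := fun h => hne (h ▸ rfl)
    refine ⟨{p, q}, ?_, .inr ⟨card_pair hpq, v, p, rfl, by simp, fun hv => hpq (hv he he')⟩⟩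
    rw [hu', goal_mk, goal_mk, sum_pair hpq]
    linear_combination hρρ + ZModModule.add_self (eConst v)
  · induction e with | _ x y =>
    induction e' with | _ z w =>
    rw [SimpleGraph.mem_edgeSet] at he he'
    simp only [Sym2.mem_iff, not_exists] at hcommon
    have hxy := he.ne
    have hzw := he'.ne
    have hdisj : ∀ v, v = x ∨ v = y → v ≠ z ∧ v ≠ w := fun v hv =>
      not_or.1 fun hv' => hcommon v ⟨hv, hv'⟩
    have hx : x ∉ ({y, z, w} : Finset C) := by simp [hxy, hdisj x]
    have hy : y ∉ ({z, w} : Finset C) := by simp [hdisj y]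
    refine ⟨{x, y, z, w}, ?_, .inl ⟨?_, by simp⟩⟩
    · rw [hu', goal_mk, goal_mk, sum_insert hx, sum_insert hy, sum_pair hzw]
      linear_combination hρρ
    · rw [card_insert_of_notMem hx, card_insert_of_notMem hy, card_pair hzw]

theorem Serves.exists_support (hρ : ∀ c, ¬ H.Adj ρ c) (hxy : H.Adj x y)
    (hu : Serves H ρ u s(x, y)) :
    ∃ S : Finset C, u = ∑ c ∈ S, eConst c ∧ (#S = 4 ∧ x ∈ S ∧ y ∈ S ∨
      #S = 2 ∧ (y ∈ S ∨ x ∈ S ∧ ¬ IsPendant H y ∨ S = {ρ, x})) := by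
  rcases hu with ⟨c, hu⟩ | ⟨e', he', hne, hu⟩
  · obtain ⟨S, hS, h4 | ⟨h2, h⟩⟩ := exists_support_of_add_goal_eq_eConst hρ hxy hu
    · exact ⟨S, hS, .inl h4⟩
    · refine ⟨S, hS, .inr ⟨h2, ?_⟩⟩
      rcases h with rfl | rfl | rfl <;> simp
  · obtain ⟨S, hS, ⟨h4, h⟩ | ⟨h2, v, p, he, hp, hv⟩⟩ :=
      exists_support_of_add_goal_eq_goal hxy he' hne hu
    · exact ⟨S, hS, .inl ⟨h4, h x (by simp), h y (by simp)⟩⟩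
    · refine ⟨S, hS, .inr ⟨h2, ?_⟩⟩
      rcases Sym2.eq_iff.1 he with ⟨rfl, rfl⟩ | ⟨rfl, rfl⟩
      · exact .inl hp
      · exact .inr (.inl ⟨hp, hv⟩)

theorem Serves.card_eq_two_or_four (hρ : ∀ c, ¬ H.Adj ρ c) {e : Sym2 C} (he : e ∈ H.edgeSet)
    {S : Finset C} (hS : Serves H ρ (∑ c ∈ S, eConst c) e) : #S = 2 ∨ #S = 4 := by
  induction e with | _ x y =>
  obtain ⟨T, hT, h⟩ := hS.exists_support hρ he
  obtain rfl : S = T := sum_eConst_injective hT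
  exact h.elim (fun h4 => .inr h4.1) fun h2 => .inl h2.1

theorem not_serves_zero (hρ : ∀ c, ¬ H.Adj ρ c) {e : Sym2 C} (he : e ∈ H.edgeSet) :
    ¬ Serves H ρ 0 e := fun h => by
  simpa using Serves.card_eq_two_or_four (S := ∅) hρ he (by rwa [sum_empty])

theorem IsBasicOperand.not_serves (hρ : ∀ c, ¬ H.Adj ρ c) {e : Sym2 C} (he : e ∈ H.edgeSet)
    {v : C → ZMod 2} (hv : IsBasicOperand H ρ e v) : ¬ Serves H ρ v e := by
  obtain ⟨S, hcard, rfl⟩ : ∃ S : Finset C, (#S = 1 ∨ #S = 3) ∧ v = ∑ c ∈ S, eConst c := by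
    rcases hv with ⟨c, rfl⟩ | ⟨e', he', -, rfl⟩
    · exact ⟨{c}, by simp, by simp⟩
    · obtain ⟨S, h3, hS⟩ := exists_card_eq_three_goal_eq_sum hρ he'
      exact ⟨S, .inr h3, hS⟩
  intro h
  have := h.card_eq_two_or_four hρ he
  omega

theorem goal_ne_eConst (hρ : ∀ c, ¬ H.Adj ρ c) {e : Sym2 C} (he : e ∈ H.edgeSet) (c : C) :
    goal ρ e ≠ eConst c := fun h =>
  not_serves_zero hρ he (.inl ⟨c, by rw [zero_add, h]⟩)

theorem goal_injOn (hρ : ∀ c, ¬ H.Adj ρ c) : Set.InjOn (goal ρ) H.edgeSet := by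
  intro e he e' he' h
  by_contra hne
  exact not_serves_zero hρ he (.inr ⟨e', he', Ne.symm hne, by rw [zero_add, h]⟩)

theorem Captures.exists_smul_add_smul_mem
    {W : Submodule (ZMod 2) (C → ZMod 2)} (h : Captures H W x y) :
    ∃ s t : ZMod 2, ¬ (s = 0 ∧ t = 0) ∧ s • eConst x + t • eConst y ∈ W := by
  rcases h with hxy | hy | ⟨hx, -⟩
  · exact ⟨1, 1, by simp, by simpa using hxy⟩
  · exact ⟨0, 1, by simp, by simpa using hy⟩
  · exact ⟨1, 0, by simp, by simpa using hx⟩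

theorem exists_absorbs_of_card_eq_four (hρ : ∀ c, ¬ H.Adj ρ c) {S : Finset C} (hS : #S = 4) :
    ∃ B : Finset (C → ZMod 2), #B ≤ 3 ∧ ∀ W : Submodule (ZMod 2) (C → ZMod 2),
      (B : Set (C → ZMod 2)) ⊆ W → Absorbs H ρ W (∑ c ∈ S, eConst c) := by
  classical
  obtain ⟨a, ha⟩ : S.Nonempty := card_pos.1 (by omega)
  refine ⟨(S.erase a).image (eConst a + eConst ·),
    card_image_le.trans (by rw [card_erase_of_mem ha, hS]), fun W hB => ?_⟩
  have hmem : ∀ c ∈ S, eConst a + eConst c ∈ W := by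
    intro c hc
    obtain rfl | hca := eq_or_ne c a
    · rw [ZModModule.add_self]
      exact W.zero_mem
    · exact hB (mem_coe.2 (mem_image_of_mem _ (mem_erase.2 ⟨hca, hc⟩)))
  have hsum : ∑ c ∈ S, eConst c = ∑ c ∈ S, (eConst a + eConst c) := by
    rw [sum_add_distrib, sum_const, hS, show 4 = 2 * 2 from rfl, mul_nsmul,
      ZModModule.char_nsmul_eq_zero 2, zero_add]
  refine ⟨hsum ▸ W.sum_mem hmem, fun x y hxy hu => ?_⟩
  obtain ⟨T, hT, h⟩ := hu.exists_support hρ hxy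
  obtain rfl : S = T := sum_eConst_injective hT
  obtain ⟨-, hx, hy⟩ | ⟨h2, -⟩ := h
  · exact .inl (add_mem_of_add_mem_of_add_mem (hmem x hx) (hmem y hy))
  · omega

theorem exists_absorbs_of_card_eq_two (hρ : ∀ c, ¬ H.Adj ρ c)
    (hpend : ∀ a, ∃ P : Finset C, #P ≤ 2 ∧ ∀ y, H.Adj a y → IsPendant H y → y ∈ P)
    {S : Finset C} (hS : #S = 2) :
    ∃ B : Finset (C → ZMod 2), #B ≤ 3 ∧ ∀ W : Submodule (ZMod 2) (C → ZMod 2),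
      eConst ρ ∈ W → (B : Set (C → ZMod 2)) ⊆ W → Absorbs H ρ W (∑ c ∈ S, eConst c) := by
  classical
  -- `e_ρ + e_a` serves edges at `a` whose other end is pendant and lies outside `S`.
  obtain ⟨A, hA, hSA, hpendA⟩ : ∃ A : Finset C, #A ≤ 3 ∧ S ⊆ insert ρ A ∧
      ∀ x y, S = {ρ, x} → H.Adj x y → IsPendant H y → y ∈ A := by
    by_cases hSρ : ρ ∈ S
    · obtain ⟨a, ha⟩ : ∃ a, S.erase ρ = {a} :=
        card_eq_one.1 (by rw [card_erase_of_mem hSρ, hS])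
      have hSa : S = {ρ, a} := by rw [← insert_erase hSρ, ha]
      obtain ⟨P, hP, hmem⟩ := hpend a
      refine ⟨insert a P, (card_insert_le a P).trans (by omega), by grind, fun x y hx hxy hy => ?_⟩
      have hxρ : x ≠ ρ := fun h => hρ y (h ▸ hxy)
      have hxa : x = a := by
        rw [← mem_singleton, ← ha, hx]
        simp [hxρ]
      exact mem_insert_of_mem (hmem y (hxa ▸ hxy) hy)
    · exact ⟨S, by omega, subset_insert ρ S, fun x y hx => absurd (hx ▸ mem_insert_self ρ _) hSρ⟩
  refine ⟨A.image eConst, card_image_le.trans hA, fun W hρW hB => ?_⟩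
  have hAW : ∀ c ∈ A, eConst c ∈ W := fun c hc => hB (mem_coe.2 (mem_image_of_mem _ hc))
  have hSW : ∀ c ∈ S, eConst c ∈ W := fun c hc =>
    (mem_insert.1 (hSA hc)).elim (fun h => h ▸ hρW) (hAW c)
  refine ⟨W.sum_mem hSW, fun x y hxy hu => ?_⟩
  obtain ⟨T, hT, h⟩ := hu.exists_support hρ hxy
  obtain rfl : S = T := sum_eConst_injective hT
  obtain ⟨h4, -⟩ | ⟨-, hy | ⟨hx, hy⟩ | hSx⟩ := h
  · omega
  · exact .inr (.inl (hSW y hy))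
  · exact .inr (.inr ⟨hSW x hx, hy⟩)
  · by_cases hy : IsPendant H y
    · exact .inr (.inl (hAW y (hpendA x y hSx hxy hy)))
    · exact .inr (.inr ⟨hSW x (by simp [hSx]), hy⟩)

theorem exists_absorbs (hρ : ∀ c, ¬ H.Adj ρ c)
    (hpend : ∀ a, ∃ P : Finset C, #P ≤ 2 ∧ ∀ y, H.Adj a y → IsPendant H y → y ∈ P)
    (u : C → ZMod 2) :
    ∃ B : Finset (C → ZMod 2), #B ≤ 3 ∧ ∀ W : Submodule (ZMod 2) (C → ZMod 2),
      eConst ρ ∈ W → (B : Set (C → ZMod 2)) ⊆ W → Absorbs H ρ W u := by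
  by_cases hu : ∃ x y, H.Adj x y ∧ Serves H ρ u s(x, y)
  · obtain ⟨x, y, hxy, hu⟩ := hu
    obtain ⟨S, rfl, -⟩ := hu.exists_support hρ hxy
    rcases hu.card_eq_two_or_four hρ hxy with h2 | h4
    · exact exists_absorbs_of_card_eq_two hρ hpend h2
    · obtain ⟨B, hB, h⟩ := exists_absorbs_of_card_eq_four hρ h4
      exact ⟨B, hB, fun W _ => h W⟩
  · push Not at hu
    exact ⟨{u}, by simp, fun W _ hB => ⟨hB (by simp), fun x y hxy h => (hu x y hxy h).elim⟩⟩

theorem exists_submodule_absorbs (hρ : ∀ c, ¬ H.Adj ρ c)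
    (hpend : ∀ a, ∃ P : Finset C, #P ≤ 2 ∧ ∀ y, H.Adj a y → IsPendant H y → y ∈ P)
    {ι : Type*} (R : Finset ι) (u : ι → C → ZMod 2) :
    ∃ W : Submodule (ZMod 2) (C → ZMod 2), FiniteDimensional (ZMod 2) W ∧
      Module.finrank (ZMod 2) W ≤ 1 + 3 * #R ∧ eConst ρ ∈ W ∧ ∀ i ∈ R, Absorbs H ρ W (u i) := by
  classical
  choose B hBcard hB using exists_absorbs hρ hpend
  have hunion := card_biUnion_le_card_mul R (fun i => B (u i)) 3 fun i _ => hBcard (u i)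
  let F := insert (eConst ρ) (R.biUnion fun i => B (u i))
  have hF : #F ≤ 1 + 3 * #R := (card_insert_le _ _).trans (by omega)
  have hsub : (F : Set (C → ZMod 2)) ⊆ Submodule.span (ZMod 2) (F : Set (C → ZMod 2)) :=
    Submodule.subset_span
  have hρF : eConst ρ ∈ Submodule.span (ZMod 2) (F : Set (C → ZMod 2)) :=
    hsub (mem_coe.2 (mem_insert_self _ _))
  refine ⟨_, .span_finset _ F, (finrank_span_finset_le_card F).trans hF, hρF, fun i hi => ?_⟩
  refine hB (u i) _ hρF (Set.Subset.trans (fun b hb => ?_) hsub)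
  exact mem_coe.2 (mem_insert_of_mem (mem_biUnion.2 ⟨i, hi, hb⟩))

theorem captures_of_add_eq_goal (hρ : ∀ c, ¬ H.Adj ρ c) (hxy : H.Adj x y)
    {W : Submodule (ZMod 2) (C → ZMod 2)} (hρW : eConst ρ ∈ W) {a b : C → ZMod 2}
    (ha : IsBasicOperand H ρ s(x, y) a ∨ Absorbs H ρ W a)
    (hb : IsBasicOperand H ρ s(x, y) b ∨ Absorbs H ρ W b) (hab : a + b = goal ρ s(x, y)) :
    Captures H W x y := by
  have haa := ZModModule.add_self a
  have hbb := ZModModule.add_self b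
  have hserves_a (hb : IsBasicOperand H ρ s(x, y) b) : Serves H ρ a s(x, y) := by
    rwa [Serves, ← hab, ← add_assoc, haa, zero_add]
  have hserves_b (ha : IsBasicOperand H ρ s(x, y) a) : Serves H ρ b s(x, y) := by
    rwa [Serves, ← hab, add_left_comm, hbb, add_zero]
  rcases ha with ha | ha <;> rcases hb with hb | hb
  · exact (ha.not_serves hρ hxy (hserves_a hb)).elim
  · exact hb.2 x y hxy (hserves_b ha)
  · exact ha.2 x y hxy (hserves_a hb)
  · refine .inl ((W.add_mem_iff_right hρW).1 ?_)
    rw [← add_assoc, ← goal_mk, ← hab]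
    exact W.add_mem ha.1 hb.1

section GoalStatements

variable {Q : MultiSLP C} {ι : Type*} {ends : ι → Sym2 C}
  {sel : ι → Fin Q.stmts.length} {W : Submodule (ZMod 2) (C → ZMod 2)} {j : ι}

theorem exists_injective_value_eq_goal (hρ : ∀ c, ¬ H.Adj ρ c) (hends : ∀ j, ends j ∈ H.edgeSet)
    (hinj : Function.Injective ends) (hQ : ∀ e ∈ H.edgeSet, goal ρ e ∈ Q.result) :
    ∃ sel : ι → Fin Q.stmts.length,
      Function.Injective sel ∧ ∀ j, Q.value (sel j) = goal ρ (ends j) := by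
  have hgoal (j : ι) : ∃ i : Fin Q.stmts.length, Q.value i = goal ρ (ends j) := by
    rcases Q.eq_eConst_or_exists_value_eq_of_mem_result (hQ _ (hends j)) with ⟨c, hc⟩ | hi
    · exact (goal_ne_eConst hρ (hends j) c hc).elim
    · exact hi
  choose sel hsel using hgoal
  refine ⟨sel, fun j k h => hinj (goal_injOn hρ (hends j) (hends k) ?_), hsel⟩
  rw [← hsel, ← hsel, h]

variable [Fintype ι]

theorem isBasicOperand_or_absorbs (hends : ∀ j, ends j ∈ H.edgeSet)
    (hinj : Function.Injective ends) (hsel : ∀ j, Q.value (sel j) = goal ρ (ends j))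
    (hW : ∀ i ∈ univ \ univ.image sel, Absorbs H ρ W (Q.value i)) {t : Term C}
    (ht : t ∈ Q.stmts[sel j]) :
    IsBasicOperand H ρ (ends j) (t.eval Q.envList) ∨ Absorbs H ρ W (t.eval Q.envList) := by
  cases t with
  | const c => exact .inl (.inl ⟨c, rfl⟩)
  | var i =>
    have hi : i < sel j := Q.lt_of_var_mem ht
    by_cases hmem : (⟨i, hi.trans (sel j).isLt⟩ : Fin Q.stmts.length) ∈ univ.image sel
    · obtain ⟨k, -, hk⟩ := mem_image.1 hmem
      have hki : (sel k : ℕ) = i := congrArg Fin.val hk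
      have hkj : k ≠ j := by
        rintro rfl
        omega
      exact .inl (.inr ⟨ends k, hends k, hinj.ne hkj, hki ▸ hsel k⟩)
    · exact .inr (hW _ (mem_sdiff.2 ⟨mem_univ _, hmem⟩))

theorem captures_of_length_eq_two (hρ : ∀ c, ¬ H.Adj ρ c) (hends : ∀ j, ends j ∈ H.edgeSet)
    (hinj : Function.Injective ends) (hsel : ∀ j, Q.value (sel j) = goal ρ (ends j))
    (hρW : eConst ρ ∈ W) (hW : ∀ i ∈ univ \ univ.image sel, Absorbs H ρ W (Q.value i))
    (hj : ends j = s(x, y)) (hlen : Q.stmts[sel j].length = 2) : Captures H W x y := by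
  obtain ⟨s, t, hst⟩ := List.length_eq_two.1 hlen
  have hxy : H.Adj x y := (SimpleGraph.mem_edgeSet H).1 (hj ▸ hends j)
  have hoperand {r : Term C} (hr : r ∈ Q.stmts[sel j]) :=
    hj ▸ isBasicOperand_or_absorbs hends hinj hsel hW hr
  have hsum : s.eval Q.envList + t.eval Q.envList = goal ρ s(x, y) := by
    rw [← hj, ← hsel, value_eq_sum, hst]
    simp
  exact captures_of_add_eq_goal hρ hxy hρW (hoperand (by simp [hst])) (hoperand (by simp [hst]))
    hsum

end GoalStatements

end Graph

section Modif

variable {N : Type}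

/-- The graph `G_modif`, on the vertex set `Const N`, in which `ρ` is isolated. -/
def modif (G : SimpleGraph N) : SimpleGraph (Const N) where
  Adj
    | .node a, .node b => G.Adj a b
    | .node a, .lam b | .node a, .mu b | .lam b, .node a | .mu b, .node a => a = b
    | _, _ => False
  symm := ⟨by rintro (_ | a | a | a) (_ | b | b | b) h <;> first | exact h | exact h.symm⟩
  loopless := ⟨by rintro (_ | a | a | a) h <;> first | exact h | exact G.irrefl h⟩

/-- The local nodes, `λ_a` for `inl a` and `μ_a` for `inr a`. -/
def localNode : N ⊕ N → Const N :=
  Sum.elim .lam .mu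

/-- The node at which the local node indexed by `l` is attached. -/
def owner : N ⊕ N → N :=
  Sum.elim id id

/-- The edges of `G_modif`: those of `G` and the local ones. -/
def modifEdge (G : SimpleGraph N) : G.edgeSet ⊕ (N ⊕ N) → Sym2 (Const N) :=
  Sum.elim (fun e => e.1.map .node) fun l => s(.node (owner l), localNode l)

variable {G : SimpleGraph N}

theorem localNode_injective : Function.Injective (localNode : N ⊕ N → Const N) := by
  rintro (a | a) (b | b) h <;> cases h <;> rfl

theorem not_modif_adj_rho (c : Const N) : ¬ (modif G).Adj .rho c := id

theorem isPendant_localNode (l : N ⊕ N) : IsPendant (modif G) (localNode l) := by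
  rcases l with a | a <;> rintro (_ | b | b | b) hb (_ | c | c | c) hc <;>
    first | exact hb.elim | exact hc.elim | exact congrArg Const.node (Eq.trans hb (Eq.symm hc))

theorem not_isPendant_node (a : N) : ¬ IsPendant (modif G) (.node a) := fun h => by
  have hlam : .lam a ∈ (modif G).neighborSet (.node a) := rfl
  have hmu : .mu a ∈ (modif G).neighborSet (.node a) := rfl
  simpa using h hlam hmu

theorem exists_card_le_two_pendant_neighbors_subset (c : Const N) :
    ∃ P : Finset (Const N), #P ≤ 2 ∧ ∀ y, (modif G).Adj c y → IsPendant (modif G) y → y ∈ P := by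
  classical
  by_cases hc : ∃ a, c = .node a
  · obtain ⟨a, rfl⟩ := hc
    refine ⟨{.lam a, .mu a}, card_le_two, ?_⟩
    rintro (_ | b | b | b) hadj hb
    · exact hadj.elim
    · exact (not_isPendant_node b hb).elim
    · obtain rfl : a = b := hadj
      simp
    · obtain rfl : a = b := hadj
      simp
  · refine ⟨∅, by simp, ?_⟩
    rintro (_ | b | b | b) hadj hb
    · exact hadj.symm.elim
    · exact (not_isPendant_node b hb).elim
    all_goals rcases c with _ | a | a | a <;> first | exact hadj.elim | exact (hc ⟨a, rfl⟩).elim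

theorem modifEdge_mem_edgeSet (j : G.edgeSet ⊕ (N ⊕ N)) :
    modifEdge G j ∈ (modif G).edgeSet := by
  rcases j with ⟨e, he⟩ | a | a
  · induction e with | _ a b => exact he
  · exact rfl
  · exact rfl

theorem modifEdge_injective : Function.Injective (modifEdge G) := by
  have hnode : Function.Injective (Const.node : N → Const N) := fun _ _ => Const.node.inj
  refine Function.Injective.sumElim ?_ ?_ ?_
  · exact (Sym2.map.injective hnode).comp Subtype.val_injective
  · intro l m h
    rcases l with a | a <;> rcases m with b | b <;> simp_all [localNode, owner]
  · rintro ⟨e, he⟩ (a | a) h <;> induction e <;> simp_all [localNode, owner]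

variable [DecidableEq N]

theorem Captures.localNode_mem {W U : Submodule (ZMod 2) (Const N → ZMod 2)} {l : N ⊕ N}
    (h : Captures (modif G) W (.node (owner l)) (localNode l)) (hWU : W ≤ U)
    (hU : eConst (.node (owner l)) ∈ U) : eConst (localNode l) ∈ U := by
  rcases h with hxy | hy | ⟨-, hl⟩
  · exact (U.add_mem_iff_right hU).1 (hWU hxy)
  · exact hWU hy
  · exact (hl (isPendant_localNode l)).elim

theorem goal_mem_targetValues {L : List (N × N)} {nodes : List N} (hnodes : ∀ a : N, a ∈ nodes)
    (hL : ∀ a b : N, G.Adj a b → s(a, b) ∈ L.map fun p => s(p.1, p.2))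
    {e : Sym2 (Const N)} (he : e ∈ (modif G).edgeSet) :
    goal .rho e ∈ targetValues L nodes := by
  have hlocal (a : N) (c : Const N) (hc : c = .lam a ∨ c = .mu a) :
      goal .rho s(.node a, c) ∈ targetValues L nodes := by
    refine List.mem_append_right _ (List.mem_flatMap.2 ⟨a, hnodes a, ?_⟩)
    rcases hc with rfl | rfl <;> simp [goal_mk]
  induction e with | _ x y =>
  rcases x with _ | a | a | a <;> rcases y with _ | b | b | b <;> try exact he.elim
  · obtain ⟨p, hp, hpab⟩ := List.mem_map.1 (hL a b he)
    refine List.mem_append_left _ (List.mem_map.2 ⟨p, hp, ?_⟩)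
    rw [← goal_mk]
    exact congrArg (fun e => goal Const.rho (e.map Const.node)) hpab
  · exact he ▸ hlocal a _ (.inl rfl)
  · exact he ▸ hlocal a _ (.inr rfl)
  · exact he ▸ Sym2.eq_swap ▸ hlocal b _ (.inl rfl)
  · exact he ▸ Sym2.eq_swap ▸ hlocal b _ (.inr rfl)

variable {W : Submodule (ZMod 2) (Const N → ZMod 2)} [FiniteDimensional (ZMod 2) W]

theorem one_add_card_add_card_le_finrank [Fintype N] (hρ : eConst .rho ∈ W)
    (hnode : ∀ a, eConst (.node a) ∈ W) {D : Finset (N ⊕ N)}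
    (hD : ∀ l ∈ D, eConst (localNode l) ∈ W) :
    1 + Fintype.card N + #D ≤ Module.finrank (ZMod 2) W := by
  let f : Option N ⊕ D → Const N :=
    Sum.elim (fun o => o.elim .rho .node) fun l => localNode l
  have hf : Function.Injective f := by
    refine Function.Injective.sumElim ?_ (localNode_injective.comp Subtype.val_injective) ?_
    · rintro (_ | a) (_ | b) h <;> cases h <;> rfl
    · rintro (_ | a) ⟨_ | b, _⟩ <;> simp [localNode]
  have hfW : ∀ k, eConst (f k) ∈ W := by
    rintro ((_ | a) | ⟨l, hl⟩)
    exacts [hρ, hnode a, hD l hl]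
  have := card_le_finrank_of_eConst_mem hf hfW
  rwa [Fintype.card_sum, Fintype.card_option, Fintype.card_coe, add_comm _ 1] at this

theorem exists_cover_one_add_card_add_card_le_finrank [Finite N] (hρ : eConst .rho ∈ W)
    {D : Finset (N ⊕ N)}
    (hD : ∀ l ∈ D, Captures (modif G) W (.node (owner l)) (localNode l)) :
    ∃ X : Finset N, (∀ a b, a ≠ b → Captures (modif G) W (.node a) (.node b) → a ∈ X ∨ b ∈ X) ∧
      1 + #D + #X ≤ Module.finrank (ZMod 2) W := by
  classical
  have := Fintype.ofFinite N
  let v : N → Const N → ZMod 2 := fun a => eConst (.node a)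
  obtain ⟨I, hI, hspan⟩ := exists_linearIndepOn_mkQ W v
  obtain ⟨I, rfl⟩ := I.toFinite.exists_finset_coe
  rw [← coe_image] at hspan
  refine ⟨Iᶜ, fun a b hab h => ?_, ?_⟩
  · by_contra! hX
    have hsub : ({a, b} : Set N) ⊆ I := by simpa [Set.insert_subset_iff] using hX
    obtain ⟨s, t, hst, hmem⟩ := h.exists_smul_add_smul_mem
    refine hst ((LinearIndepOn.pair_iff _ hab).1 (hI.mono hsub) s t ?_)
    rwa [Function.comp_apply, Function.comp_apply, ← map_smul, ← map_smul, ← map_add,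
      Submodule.mkQ_apply, Submodule.Quotient.mk_eq_zero]
  · let U := W ⊔ Submodule.span (ZMod 2) (I.image v : Set (Const N → ZMod 2))
    have hWU : W ≤ U := le_sup_left
    have hlow : 1 + Fintype.card N + #D ≤ Module.finrank (ZMod 2) U :=
      one_add_card_add_card_le_finrank (hWU hρ) hspan fun l hl =>
        (hD l hl).localNode_mem hWU (hspan (owner l))
    have hupp : Module.finrank (ZMod 2) U ≤ Module.finrank (ZMod 2) W + #I :=
      (Submodule.finrank_add_le_finrank_add_finrank _ _).trans
        (Nat.add_le_add_left ((finrank_span_finset_le_card _).trans card_image_le) _)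
    have hcompl := card_add_card_compl I
    omega

variable [Fintype N]

theorem tau_le_card_add_card {X : Finset N} {F : Finset G.edgeSet}
    (h : ∀ e : G.edgeSet, e ∈ F ∨ ∃ a ∈ X, a ∈ e.1) : tau G ≤ #X + #F := by
  let X' := X ∪ F.image fun e => e.1.out.1
  have hX' : ∀ a b, G.Adj a b → a ∈ X' ∨ b ∈ X' := by
    intro a b hab
    suffices ∃ c ∈ X', c ∈ s(a, b) by grind
    rcases h ⟨s(a, b), hab⟩ with hF | ⟨c, hc, hcab⟩
    · exact ⟨_, mem_union_right _ (mem_image_of_mem _ hF), Sym2.out_fst_mem _⟩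
    · exact ⟨c, mem_union_left _ hc, hcab⟩
  calc tau G ≤ #X' := Nat.sInf_le ⟨X', hX', rfl⟩
    _ ≤ #X + #F := (card_union_le _ _).trans (Nat.add_le_add_left card_image_le _)

theorem one_add_tau_add_two_mul_card_le_finrank_add_card
    (hρ : eConst .rho ∈ W) {E : Finset (G.edgeSet ⊕ (N ⊕ N))}
    (hE : ∀ j ∉ E, ∀ x y, modifEdge G j = s(x, y) → Captures (modif G) W x y) :
    1 + tau G + 2 * Fintype.card N ≤ Module.finrank (ZMod 2) W + #E := by
  obtain ⟨X, hX, hrank⟩ := exists_cover_one_add_card_add_card_le_finrank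
    (D := E.toRightᶜ) hρ fun l hl => hE (.inr l) (by simpa using hl) _ _ rfl
  have htau : tau G ≤ #X + #E.toLeft := by
    refine tau_le_card_add_card fun ⟨e, he⟩ => ?_
    induction e with | _ a b =>
    by_cases hab : .inl ⟨s(a, b), he⟩ ∈ E
    · exact .inl (mem_toLeft.2 hab)
    · have := hX a b (G.ne_of_adj he) (hE _ hab _ _ rfl)
      exact .inr (by grind)
  have hlocal : #E.toRight + #E.toRightᶜ = 2 * Fintype.card N := by
    rw [card_add_card_compl, Fintype.card_sum, two_mul]
  have hsplit := E.card_toLeft_add_card_toRight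
  omega

end Modif

end MultiSLP

open MultiSLP in
theorem multislp_cost_lower_bound_general {N : Type} [Fintype N] [DecidableEq N]
    (G : SimpleGraph N) [DecidableRel G.Adj] (Q : MultiSLP (Const N))
    (hQ : ∀ e ∈ (modif G).edgeSet, goal .rho e ∈ Q.result) :
    3 * G.edgeFinset.card + 8 * Fintype.card N + tau G ≤ Q.costM := by
  obtain ⟨sel, hinj, hsel⟩ := exists_injective_value_eq_goal not_modif_adj_rho
    modifEdge_mem_edgeSet modifEdge_injective hQ
  obtain ⟨W, _, hrank, hρW, hW⟩ := exists_submodule_absorbs not_modif_adj_rho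
    exists_card_le_two_pendant_neighbors_subset
    (Finset.univ \ Finset.univ.image sel) fun i => Q.value i
  have hcover := one_add_tau_add_two_mul_card_le_finrank_add_card
    (E := {j | Q.stmts[sel j].length ≠ 2}) hρW fun j hlen x y hj =>
      captures_of_length_eq_two not_modif_adj_rho modifEdge_mem_edgeSet modifEdge_injective
        hsel hρW hW hj (by simpa using hlen)
  have hcost := Q.three_mul_card_add_card_le_costM hinj
  rw [Fintype.card_sum, Fintype.card_sum, ← SimpleGraph.edgeFinset_card] at hcost
  omega

/-- **Lower bound for the memory-access cost.**  Let `G` be a finite simple graph with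
node set `N` and edge set `E` (enumerated without repetition by `L`; `nodes` enumerates
`N`).  Every MultiSLP `Q` equivalent to `P_G` satisfies
`#_M(Q) ≥ 3·|E| + 8·|N| + τ(G)`, where `τ(G)` is the minimum vertex-cover number. -/
theorem multislp_cost_lower_bound {N : Type} [Fintype N] [DecidableEq N]
    (G : SimpleGraph N) [DecidableRel G.Adj]
    (L : List (N × N)) (nodes : List N)
    (hnodesN : nodes.Nodup) (hnodesA : ∀ a : N, a ∈ nodes)
    (hLN : (L.map fun p => s(p.1, p.2)).Nodup)
    (hLadj : ∀ p ∈ L, G.Adj p.1 p.2)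
    (hLall : ∀ a b : N, G.Adj a b → s(a, b) ∈ L.map fun p => s(p.1, p.2))
    (Q : MultiSLP (Const N)) (hQ : Q.result = targetValues L nodes) :
    3 * G.edgeFinset.card + 8 * Fintype.card N + tau G ≤ Q.costM :=
  multislp_cost_lower_bound_general G Q fun _ he =>
    hQ ▸ MultiSLP.goal_mem_targetValues hnodesA hLall he
end
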